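/- arXiv:1602.00768 — 3 statements merged into one kernel-verified Lean document; each statement's English description precedes it below -/
import Mathlib

section
/- For every x in S_n', the kernel of x is contained in span{u_1, u_{m+n+1}}; in particular dim ker x ≤ 2. (First claim of Lemma 2.2 of the paper, which shows that every element of the Mirkovic–Vybornov slice for a two-block nilpotent has at most two Jordan blocks.) -/
/-!
For `x` in the slice, `x - z_n` maps all of `ℂ^(m+2n)` into `span{u_{m+n}, u_{m+2n}}`, so `x v = 0`
forces `z_n v` to lie in that span. The `i`-th coordinate of `z_n v` is `v_{i+1}` whenever
`i ≠ m+n, m+2n` (1-based), hence all coordinates of `v` vanish except possibly the first and the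
`(m+n+1)`-st. The dimension bound follows since a span of two vectors has dimension at most `2`.
-/

open Module BigOperators

noncomputable section

/-- The `k`-th standard basis vector `u_k` of `ℂ^(m+2n)`, indexed `1`-based;
it is zero if `k` is out of the range `1, …, m+2n`. -/
def stdVec (m n : ℕ) (k : ℕ) : Fin (m + 2*n) → ℂ := fun i => if (i : ℕ) + 1 = k then 1 else 0

/-- The matrix of the two-block nilpotent `z_n` of Jordan type `(m+n, n)`:
`z_n u_i = u_{i-1}` for `2 ≤ i ≤ m+n` and for `m+n+2 ≤ i ≤ m+2n`, and
`z_n u_1 = z_n u_{m+n+1} = 0`. -/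
def zMat (m n : ℕ) : Matrix (Fin (m + 2*n)) (Fin (m + 2*n)) ℂ :=
  fun i j => if (j : ℕ) = (i : ℕ) + 1 ∧ (j : ℕ) ≠ m + n then 1 else 0

/-- The two-block nilpotent `z_n` as an endomorphism of `ℂ^(m+2n)`. -/
def zn (m n : ℕ) : Module.End ℂ (Fin (m + 2*n) → ℂ) := Matrix.toLin' (zMat m n)

/-- The enlarged slice `S_n' ⊆ End(ℂ^(m+2n))`: the endomorphisms whose matrix agrees
with that of `z_n` outside rows `m+n` and `m+2n`, i.e. `x u_j - z_n u_j` lies in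
`span{u_{m+n}, u_{m+2n}}` for every `j`. -/
def slice' (m n : ℕ) : Set (Module.End ℂ (Fin (m + 2*n) → ℂ)) :=
  { x | ∀ j : ℕ, x (stdVec m n j) - zn m n (stdVec m n j) ∈
      Submodule.span ℂ {stdVec m n (m + n), stdVec m n (m + 2*n)} }


/-- The defining condition of `slice'`, extended from basis vectors to all vectors. -/
lemma sub_mem_span_of_mem_slice' {m n : ℕ} {x : Module.End ℂ (Fin (m + 2*n) → ℂ)}
    (hx : x ∈ slice' m n) (v : Fin (m + 2*n) → ℂ) :
    x v - zn m n v ∈ Submodule.span ℂ {stdVec m n (m + n), stdVec m n (m + 2*n)} := by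
  have hv : v = ∑ j : Fin (m + 2*n), v j • stdVec m n ((j : ℕ) + 1) := by
    ext i
    simp [stdVec, Finset.sum_apply, Fin.val_inj]
  rw [← LinearMap.sub_apply, hv, map_sum]
  refine Submodule.sum_mem _ fun j _ => ?_
  rw [map_smul]
  exact Submodule.smul_mem _ _ (hx _)

lemma zn_apply {m n : ℕ} (v : Fin (m + 2*n) → ℂ) (i k : Fin (m + 2*n))
    (hk : (k : ℕ) = i + 1) (hk' : (k : ℕ) ≠ m + n) : zn m n v i = v k := by
  rw [zn, Matrix.toLin'_apply, Matrix.mulVec, dotProduct, Finset.sum_eq_single k]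
  · simp [zMat, hk, hk ▸ hk']
  · intro j _ hj
    have : (j : ℕ) ≠ i + 1 := fun h => hj (Fin.ext (h.trans hk.symm))
    simp [zMat, this]
  · simp

/-- For every `x` in the enlarged slice `S_n'`, the kernel of `x` is
contained in `span{u_1, u_{m+n+1}}`; in particular `dim ker x ≤ 2`. -/
theorem slice'_ker_le_span (m n : ℕ) (hn : 1 ≤ n)
    (x : Module.End ℂ (Fin (m + 2*n) → ℂ)) (hx : x ∈ slice' m n) :
    LinearMap.ker x ≤ Submodule.span ℂ {stdVec m n 1, stdVec m n (m + n + 1)} ∧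
    Module.finrank ℂ (LinearMap.ker x) ≤ 2 := by
  have hle : LinearMap.ker x ≤ Submodule.span ℂ {stdVec m n 1, stdVec m n (m + n + 1)} := by
    intro v hv
    rw [LinearMap.mem_ker] at hv
    have hz := sub_mem_span_of_mem_slice' hx v
    rw [hv, zero_sub, Submodule.neg_mem_iff, Submodule.mem_span_pair] at hz
    obtain ⟨a, b, hab⟩ := hz
    have hvanish : ∀ k : Fin (m + 2*n), (k : ℕ) ≠ 0 → (k : ℕ) ≠ m + n → v k = 0 := by
      intro k h0 h1
      have hlt := k.isLt
      rw [← zn_apply v ⟨k - 1, by omega⟩ k (by simp only; omega) h1, ← hab]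
      -- the shifted index `k - 1` avoids the rows `m+n` and `m+2n` of the span
      have e1 : (k : ℕ) - 1 + 1 ≠ m + n := by omega
      have e2 : (k : ℕ) - 1 + 1 ≠ m + 2*n := by omega
      simp [stdVec, e1, e2]
    rw [Submodule.mem_span_pair]
    refine ⟨v ⟨0, by omega⟩, v ⟨m + n, by omega⟩, ?_⟩
    ext k
    by_cases h0 : (k : ℕ) = 0
    · have hk : k = ⟨0, by omega⟩ := Fin.ext h0
      simp only [stdVec, Pi.add_apply, Pi.smul_apply, h0, ← hk]
      rw [if_neg (show ¬ (0 + 1 = m + n + 1) by omega)]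
      simp
    · by_cases h1 : (k : ℕ) = m + n
      · have hk : k = ⟨m + n, by omega⟩ := Fin.ext h1
        have : ¬ (m = 0 ∧ n = 0) := by omega
        simp [stdVec, h1, this, ← hk]
      · simp [stdVec, h0, h1, hvanish k h0 h1]
  refine ⟨hle, (Submodule.finrank_mono hle).trans ?_⟩
  classical
  have h := finrank_span_finset_le_card (R := ℂ) {stdVec m n 1, stdVec m n (m + n + 1)}
  rw [Finset.coe_pair] at h
  exact h.trans Finset.card_le_two
end
end

section
/- If x ∈ S_n' has dim ker x = 2, then γ restricts to a linear isomorphism from the image of x onto ℂ^{m+2n−2}. (Second claim of Lemma 2.2 of the paper: the natural isomorphism φ_x : x·V_{m+2n+2} ≅ ℂ^{m+2n}.) -/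
/-!
Since `γ` kills `u_{m+n}` and `u_{m+2n}`, every `x ∈ S_n'` satisfies `γ (x u_k) = γ (z_n u_k)`.
Each standard basis vector of `ℂ^(m+2n-2)` is of the form `γ (z_n u_k)` for a suitable `k`, so `γ`
maps the image of `x` onto `ℂ^(m+2n-2)`. If `dim ker x = 2`, the image of `x` has dimension
`m+2n-2` by rank-nullity, so this surjection is bijective.
-/

open Module BigOperators

noncomputable section

/-- The matrix of the projection `γ : ℂ^(m+2n) → ℂ^(m+2n-2)`:
`γ u_i = u_i` for `1 ≤ i ≤ m+n-1`, `γ u_{m+n} = 0`,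
`γ u_{m+n+j} = u_{m+n-1+j}` for `1 ≤ j ≤ n-1`, and `γ u_{m+2n} = 0`. -/
def gamMat (m n : ℕ) : Matrix (Fin (m + 2*(n-1))) (Fin (m + 2*n)) ℂ :=
  fun i j => if ((j : ℕ) = (i : ℕ) ∧ (j : ℕ) + 1 < m + n) ∨
      ((j : ℕ) = (i : ℕ) + 1 ∧ m + n ≤ (j : ℕ)) then 1 else 0

/-- The linear map `γ : ℂ^(m+2n) → ℂ^(m+2n-2)`. -/
def gam (m n : ℕ) : (Fin (m + 2*n) → ℂ) →ₗ[ℂ] (Fin (m + 2*(n-1)) → ℂ) :=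
  Matrix.toLin' (gamMat m n)

lemma stdVec_succ_eq_single (m n : ℕ) (j : Fin (m + 2*n)) :
    stdVec m n (j + 1) = Pi.single j 1 := by
  ext i
  simp [stdVec, Pi.single_apply, Fin.ext_iff]

lemma zn_stdVec (m n k : ℕ) (hk : k + 1 < m + 2*n) (hk' : k + 1 ≠ m + n) :
    zn m n (stdVec m n (k + 2)) = stdVec m n (k + 1) := by
  have h := stdVec_succ_eq_single m n ⟨k + 1, hk⟩
  simp only at h
  rw [h, zn, Matrix.toLin'_apply, Matrix.mulVec_single_one]
  ext i
  simp only [Matrix.col_apply, zMat, stdVec]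
  congr 1
  simp only [eq_iff_iff]
  omega

lemma gam_stdVec_apply (m n k : ℕ) (hk : k < m + 2*n) (i : Fin (m + 2*(n-1))) :
    gam m n (stdVec m n (k + 1)) i = gamMat m n i ⟨k, hk⟩ := by
  have h := stdVec_succ_eq_single m n ⟨k, hk⟩
  simp only at h
  rw [h, gam, Matrix.toLin'_apply, Matrix.mulVec_single_one, Matrix.col_apply]

lemma gam_eq_zero_of_mem_span (m n : ℕ) (hn : 1 ≤ n) (v : Fin (m + 2*n) → ℂ)
    (hv : v ∈ Submodule.span ℂ {stdVec m n (m + n), stdVec m n (m + 2*n)}) :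
    gam m n v = 0 := by
  suffices h : Submodule.span ℂ {stdVec m n (m + n), stdVec m n (m + 2*n)} ≤
      LinearMap.ker (gam m n) from h hv
  rw [Submodule.span_le]
  rintro _ (rfl | rfl)
  · ext i
    rw [show m + n = (m + n - 1) + 1 by omega, gam_stdVec_apply m n _ (by omega)]
    have := i.2
    simp only [gamMat, Pi.zero_apply, ite_eq_right_iff]
    omega
  · ext i
    have hlast : stdVec m n (m + 2*n) = stdVec m n ((m + 2*n - 1) + 1) :=
      congrArg (stdVec m n) (by omega)
    rw [hlast, gam_stdVec_apply m n _ (by omega)]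
    have := i.2
    simp only [gamMat, Pi.zero_apply, ite_eq_right_iff]
    omega

lemma gam_slice_stdVec (m n : ℕ) (hn : 1 ≤ n)
    (x : Module.End ℂ (Fin (m + 2*n) → ℂ)) (hx : x ∈ slice' m n) (j : ℕ) :
    gam m n (x (stdVec m n j)) = gam m n (zn m n (stdVec m n j)) := by
  have h := gam_eq_zero_of_mem_span m n hn _ (hx j)
  rwa [map_sub, sub_eq_zero] at h

/-- Every standard basis vector of `ℂ^(m+2n-2)` has a preimage under `γ ∘ x` among the `u_k`. -/
lemma exists_gam_slice_eq_single (m n : ℕ) (hn : 1 ≤ n)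
    (x : Module.End ℂ (Fin (m + 2*n) → ℂ)) (hx : x ∈ slice' m n) (i : Fin (m + 2*(n-1))) :
    ∃ k, gam m n (x (stdVec m n k)) = Pi.single i 1 := by
  have hi := i.2
  by_cases h : (i : ℕ) + 1 < m + n
  · -- In the first block `z_n u_{i+2} = u_{i+1}`, and `γ` keeps the index (`i` is 0-based).
    refine ⟨i + 2, ?_⟩
    rw [gam_slice_stdVec m n hn x hx, zn_stdVec m n _ (by omega) (by omega)]
    ext l
    rw [gam_stdVec_apply m n _ (by omega)]
    simp only [gamMat, Pi.single_apply, Fin.ext_iff]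
    congr 1
    simp only [eq_iff_iff]
    omega
  · -- In the second block `γ` lowers the index by one, so the preimage is shifted once more.
    refine ⟨i + 3, ?_⟩
    rw [gam_slice_stdVec m n hn x hx, zn_stdVec m n (i + 1) (by omega) (by omega)]
    ext l
    rw [gam_stdVec_apply m n _ (by omega)]
    simp only [gamMat, Pi.single_apply, Fin.ext_iff]
    congr 1
    simp only [eq_iff_iff]
    omega

/-- If `x ∈ S_n'` has `dim ker x = 2`, then `γ` restricts to a linear
isomorphism from the image of `x` onto `ℂ^(m+2n−2)`. -/
theorem gam_restrict_range_bijective (m n : ℕ) (hn : 1 ≤ n)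
    (x : Module.End ℂ (Fin (m + 2*n) → ℂ)) (hx : x ∈ slice' m n)
    (hker : Module.finrank ℂ (LinearMap.ker x) = 2) :
    Function.Bijective ((gam m n).domRestrict (LinearMap.range x)) := by
  have hsurj : Function.Surjective ((gam m n).domRestrict (LinearMap.range x)) := by
    rw [← LinearMap.range_eq_top, eq_top_iff, ← (Pi.basisFun ℂ (Fin (m + 2*(n-1)))).span_eq,
      Submodule.span_le]
    rintro _ ⟨i, rfl⟩
    obtain ⟨k, hk⟩ := exists_gam_slice_eq_single m n hn x hx i
    exact ⟨⟨x (stdVec m n k), LinearMap.mem_range_self x _⟩, by simpa using hk⟩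
  have hdim : Module.finrank ℂ (LinearMap.range x) =
      Module.finrank ℂ (Fin (m + 2*(n-1)) → ℂ) := by
    have h := LinearMap.finrank_range_add_finrank_ker x
    rw [hker, Module.finrank_fin_fun] at h
    rw [Module.finrank_fin_fun]
    omega
  exact ⟨(LinearMap.injective_iff_surjective_of_finrank_eq_finrank hdim).2 hsurj, hsurj⟩
end
end

section
/- The map x ↦ Φ(x) := γ ∘ x ∘ (γ|_{im x})^{−1} is a bijection from the set {x ∈ S_n : x nilpotent and dim ker x = 2} onto the set {y ∈ S_{n−1} : y nilpotent}. (Claim in the proof of Proposition 2.3 of the paper: Φ gives a bijection between the nilpotent elements of the slice S_{n+1} with two-dimensional kernel and the nilpotent elements of the slice S_n, stated here with indices (n, n−1).) -/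
/-!
Write `n = k + 1`, `V = ℂ^(m+2k+2)`, `W = ℂ^(m+2k)`, and let `σ : V → W` be the map that drops the
first coordinate of each of the two Jordan blocks (`γ` drops the last ones). Membership of `x` in
the enlarged slice `S_n'` implies `γ ∘ x = σ`. Hence `ker x ⊆ ker σ`, and the kernel of `x` is
two-dimensional exactly when `ker x = ker σ`, i.e. when `x = s ∘ σ` for a linear section `s` of `γ`
(`exists_section`). In that case `im x = im s`, the inverse of `γ|_{im x}` is `s`, and therefore
`Φ(x) = σ ∘ s` (`Phi_comp`). So `x` and `Φ(x)` are the two composites of `s` and `σ`, and one is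
nilpotent iff the other is.

It remains to see that `s ↦ σ ∘ s` is a bijection from the sections `s` of `γ` with `s ∘ σ ∈ S_n`
onto `S_{n-1}`. A section is determined by its coordinates at the ends of the two blocks, and these
are the two free rows of `σ ∘ s`; the vanishing conditions on the last row correspond to each other
because `σ` shifts basis vectors of the first block by one. When `n = 1` the second block of `W` is
empty, and the last coordinate of `s` is zero by the slice condition.
-/

open Module BigOperators

noncomputable section

/-- The matrix entry `x_{p,q}` (`1`-based) of an endomorphism of `ℂ^(m+2n)`
in the standard basis `u_1, …, u_{m+2n}`. -/
def entry (m n : ℕ) (x : Module.End ℂ (Fin (m + 2*n) → ℂ)) (p q : ℕ) : ℂ :=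
  ∑ i, stdVec m n p i * x (stdVec m n q) i

/-- The Mirkovic–Vybornov slice `S_n ⊆ S_n'`: for `n ≥ 1` it consists of those
`x ∈ S_n'` whose matrix entries `x_{m+2n, j}` vanish for `n+1 ≤ j ≤ m+n`
(for `n = 0` the slices `S_0` and `S_0'` coincide, so no further condition is imposed). -/
def MVslice (m n : ℕ) : Set (Module.End ℂ (Fin (m + 2*n) → ℂ)) :=
  { x | x ∈ slice' m n ∧
      ∀ j : ℕ, n + 1 ≤ j → j ≤ m + n → n ≠ 0 → entry m n x (m + 2*n) j = 0 }

-- `Φ(x) := γ ∘ x ∘ (γ|_{im x})⁻¹ ∈ End(ℂ^(m+2n-2))`, defined whenever `γ` restricts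
-- to a bijection from `im x` onto `ℂ^(m+2n-2)` (junk value `0` otherwise).
open Classical in
noncomputable def Phi (m n : ℕ) (x : Module.End ℂ (Fin (m + 2*n) → ℂ)) :
    Module.End ℂ (Fin (m + 2*(n-1)) → ℂ) :=
  if h : Function.Bijective ((gam m n).domRestrict (LinearMap.range x)) then
    (gam m n) ∘ₗ x ∘ₗ (LinearMap.range x).subtype ∘ₗ
      (LinearEquiv.ofBijective ((gam m n).domRestrict (LinearMap.range x)) h).symm.toLinearMap
  else 0

/-! ### The maps `γ` and `σ` in coordinates -/

/-- The map `γ`, with codomain written without the truncated subtraction `(k+1)-1`. -/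
def gamK (m k : ℕ) : (Fin (m + 2*(k+1)) → ℂ) →ₗ[ℂ] (Fin (m + 2*k) → ℂ) := gam m (k+1)

/-- The map `σ : ℂ^(m+2k+2) → ℂ^(m+2k)` dropping the (`0`-based) coordinates `0` and `m+k+1`,
the first coordinates of the two Jordan blocks. -/
def sigK (m k : ℕ) : (Fin (m + 2*(k+1)) → ℂ) →ₗ[ℂ] (Fin (m + 2*k) → ℂ) :=
  LinearMap.funLeft ℂ ℂ fun i => if (i : ℕ) < m + k then ⟨i + 1, by omega⟩ else ⟨i + 2, by omega⟩

/-- A right inverse of `σ`. -/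
def tauK (m k : ℕ) : (Fin (m + 2*k) → ℂ) →ₗ[ℂ] (Fin (m + 2*(k+1)) → ℂ) where
  toFun w i :=
    if h : 1 ≤ (i : ℕ) ∧ (i : ℕ) ≤ m + k then w ⟨i - 1, by omega⟩
    else if h : m + k + 2 ≤ (i : ℕ) then w ⟨i - 2, by omega⟩ else 0
  map_add' a b := by
    ext i; simp only [Pi.add_apply]; split_ifs <;> simp
  map_smul' c a := by
    ext i; simp only [Pi.smul_apply]; split_ifs <;> simp

lemma gamK_apply_lt (m k : ℕ) (v : Fin (m + 2*(k+1)) → ℂ) (i : ℕ) (h : i < m + k) :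
    gamK m k v ⟨i, by omega⟩ = v ⟨i, by omega⟩ := by
  change (gamMat m (k+1)).mulVec v ⟨i, _⟩ = _
  rw [Matrix.mulVec, dotProduct, Finset.sum_eq_single ⟨i, by omega⟩]
  · rw [gamMat, if_pos (Or.inl ⟨rfl, by simp only; omega⟩), one_mul]
  · intro j _ hj
    rw [gamMat, if_neg, zero_mul]
    rw [Ne, Fin.ext_iff] at hj
    simp only at hj ⊢; omega
  · simp

lemma gamK_apply_ge (m k : ℕ) (v : Fin (m + 2*(k+1)) → ℂ) (i : ℕ) (h : m + k ≤ i)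
    (h' : i < m + 2*k) :
    gamK m k v ⟨i, h'⟩ = v ⟨i + 1, by omega⟩ := by
  change (gamMat m (k+1)).mulVec v ⟨i, _⟩ = _
  rw [Matrix.mulVec, dotProduct, Finset.sum_eq_single ⟨i + 1, by omega⟩]
  · rw [gamMat, if_pos (Or.inr ⟨rfl, by simp only; omega⟩), one_mul]
  · intro j _ hj
    rw [gamMat, if_neg, zero_mul]
    rw [Ne, Fin.ext_iff] at hj
    simp only at hj ⊢; omega
  · simp

lemma sigK_apply_lt (m k : ℕ) (v : Fin (m + 2*(k+1)) → ℂ) (i : ℕ) (h : i < m + k) :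
    sigK m k v ⟨i, by omega⟩ = v ⟨i + 1, by omega⟩ := by
  simp [sigK, LinearMap.funLeft_apply, h]

lemma sigK_apply_ge (m k : ℕ) (v : Fin (m + 2*(k+1)) → ℂ) (i : ℕ) (h : m + k ≤ i)
    (h' : i < m + 2*k) :
    sigK m k v ⟨i, h'⟩ = v ⟨i + 2, by omega⟩ := by
  simp [sigK, LinearMap.funLeft_apply, not_lt.mpr h]

lemma sigK_tauK (m k : ℕ) (w : Fin (m + 2*k) → ℂ) : sigK m k (tauK m k w) = w := by
  ext ⟨i, hi⟩
  by_cases h : i < m + k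
  · rw [sigK_apply_lt m k _ i h]
    change dite _ _ _ = _
    rw [dif_pos (by simp only; omega)]; rfl
  · rw [sigK_apply_ge m k _ i (by omega) hi]
    change dite _ _ _ = _
    rw [dif_neg (by simp only; omega), dif_pos (by simp only; omega)]; rfl

lemma finrank_ker_sigK (m k : ℕ) : finrank ℂ (LinearMap.ker (sigK m k)) = 2 := by
  have hr : LinearMap.range (sigK m k) = ⊤ :=
    LinearMap.range_eq_top.2 fun w => ⟨_, sigK_tauK m k w⟩
  have := LinearMap.finrank_range_add_finrank_ker (sigK m k)
  rw [hr, finrank_top, Module.finrank_fin_fun, Module.finrank_fin_fun] at this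
  omega

/-! ### The slices in coordinates -/

lemma zn_apply_s6 (m n : ℕ) (v : Fin (m + 2*n) → ℂ) (i : ℕ) (h : i + 1 < m + 2*n)
    (h' : i + 1 ≠ m + n) : zn m n v ⟨i, by omega⟩ = v ⟨i + 1, h⟩ := by
  change (zMat m n).mulVec v ⟨i, _⟩ = _
  rw [Matrix.mulVec, dotProduct, Finset.sum_eq_single ⟨i + 1, h⟩]
  · rw [zMat, if_pos ⟨rfl, h'⟩, one_mul]
  · intro j _ hj
    rw [zMat, if_neg, zero_mul]
    rw [Ne, Fin.ext_iff] at hj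
    simp only at hj ⊢; omega
  · simp

lemma stdVec_eq_single (m n : ℕ) (j : ℕ) (h : j < m + 2*n) :
    stdVec m n (j + 1) = Pi.single ⟨j, h⟩ 1 := by
  ext i
  simp [stdVec, Pi.single_apply, Fin.ext_iff]

/-- Membership in `S_n'` in (`0`-based) coordinates: away from the last coordinates of the two
blocks, `x` is the shift. -/
lemma mem_slice'_iff (m n : ℕ) (x : Module.End ℂ (Fin (m + 2*n) → ℂ)) :
    x ∈ slice' m n ↔ ∀ (v : Fin (m + 2*n) → ℂ) (i : ℕ) (h : i + 1 < m + 2*n), i + 1 ≠ m + n →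
      x v ⟨i, by omega⟩ = v ⟨i + 1, h⟩ := by
  constructor
  · intro hx v i h h'
    rw [← zn_apply_s6 m n v i h h']
    have : (LinearMap.proj ⟨i, by omega⟩ : _ →ₗ[ℂ] ℂ) ∘ₗ x =
        (LinearMap.proj ⟨i, by omega⟩ : _ →ₗ[ℂ] ℂ) ∘ₗ zn m n := by
      -- Both sides are linear in `v`, so it suffices to compare them on the basis.
      refine (Pi.basisFun ℂ _).ext fun j => ?_
      have hj := hx (j + 1)
      rw [stdVec_eq_single m n j j.2, Submodule.mem_span_pair] at hj
      obtain ⟨a, b, hab⟩ := hj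
      have := congrFun hab ⟨i, by omega⟩
      have h1 : stdVec m n (m + n) ⟨i, by omega⟩ = 0 := if_neg h'
      have h2 : stdVec m n (m + 2*n) ⟨i, by omega⟩ = 0 := if_neg (by simp only; omega)
      simp only [Pi.add_apply, Pi.smul_apply, h1, h2, smul_zero, add_zero, Pi.sub_apply] at this
      simp only [Pi.basisFun_apply, LinearMap.comp_apply, LinearMap.proj_apply]
      exact (sub_eq_zero.1 this.symm)
    exact LinearMap.congr_fun this v
  · intro hx j
    set d := x (stdVec m n j) - zn m n (stdVec m n j) with hd
    have hd0 : ∀ (i : ℕ) (h : i + 1 < m + 2*n), i + 1 ≠ m + n → d ⟨i, by omega⟩ = 0 := by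
      intro i h h'
      rw [hd, Pi.sub_apply, hx _ i h h', zn_apply_s6 m n _ i h h', sub_self]
    have hd1 : d = ∑ i, d i • (Pi.single i 1 : Fin (m + 2*n) → ℂ) := by
      simpa using (pi_eq_sum_univ' d)
    rw [hd1]
    refine Submodule.sum_mem _ fun i _ => ?_
    by_cases h1 : (i : ℕ) + 1 = m + n
    · refine Submodule.smul_mem _ _ (Submodule.subset_span (Or.inl ?_))
      rw [← h1, stdVec_eq_single m n i i.2]
    by_cases h2 : (i : ℕ) + 1 = m + 2*n
    · refine Submodule.smul_mem _ _ (Submodule.subset_span (Or.inr ?_))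
      exact ((congrArg (stdVec m n) h2).symm.trans (stdVec_eq_single m n i i.2)).symm
    · rw [show d i = 0 from hd0 i (by omega) h1, zero_smul]
      exact Submodule.zero_mem _

/-- The slice condition for `n = k + 1` in `0`-based coordinates. -/
lemma mem_MVslice_succ_iff (m k : ℕ) (x : Module.End ℂ (Fin (m + 2*(k+1)) → ℂ)) :
    x ∈ MVslice m (k+1) ↔ x ∈ slice' m (k+1) ∧
      ∀ (j : ℕ) (_ : k + 1 ≤ j) (_ : j < m + k + 1),
        x (Pi.single ⟨j, by omega⟩ 1) ⟨m + 2*k + 1, by omega⟩ = 0 := by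
  have hent : ∀ (j : ℕ) (h : j < m + 2*(k+1)), entry m (k+1) x (m + 2*(k+1)) (j + 1) =
      x (Pi.single ⟨j, h⟩ 1) ⟨m + 2*k + 1, by omega⟩ := by
    intro j h
    have hlast : stdVec m (k+1) (m + 2*(k+1)) = Pi.single ⟨m + 2*k + 1, by omega⟩ 1 :=
      stdVec_eq_single m (k+1) (m + 2*k + 1) (by omega)
    rw [entry, stdVec_eq_single m (k+1) j h, hlast]
    simp [Pi.single_apply]
  refine and_congr_right fun _ => ⟨fun H j h1 h2 => ?_, fun H j h1 h2 _ => ?_⟩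
  · rw [← hent]
    exact H (j + 1) (by omega) (by omega) (by omega)
  · obtain ⟨j, rfl⟩ : ∃ i, j = i + 1 := ⟨j - 1, by omega⟩
    rw [hent j (by omega)]
    exact H j (by omega) (by omega)

lemma mem_MVslice_zero_iff (m : ℕ) (x : Module.End ℂ (Fin (m + 2*0) → ℂ)) :
    x ∈ MVslice m 0 ↔ x ∈ slice' m 0 :=
  ⟨fun h => h.1, fun h => ⟨h, fun _ _ _ h0 => absurd rfl h0⟩⟩

/-! ### Factorization through `σ` and the formula for `Φ` -/

lemma gamK_apply_of_mem {m k : ℕ} {x : Module.End ℂ (Fin (m + 2*(k+1)) → ℂ)}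
    (hx : x ∈ slice' m (k+1)) (v : Fin (m + 2*(k+1)) → ℂ) : gamK m k (x v) = sigK m k v := by
  rw [mem_slice'_iff] at hx
  ext ⟨i, hi⟩
  by_cases h : i < m + k
  · rw [sigK_apply_lt m k _ i h, gamK_apply_lt m k _ i h]
    exact hx v i (by omega) (by omega)
  · rw [sigK_apply_ge m k _ i (by omega) hi, gamK_apply_ge m k _ i (by omega) hi]
    exact hx v (i + 1) (by omega) (by omega)

/-- An element of `S_n'` with two-dimensional kernel factors as a section of `γ` after `σ`. -/
lemma exists_section {m k : ℕ} {x : Module.End ℂ (Fin (m + 2*(k+1)) → ℂ)}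
    (hx : x ∈ slice' m (k+1)) (hk : finrank ℂ (LinearMap.ker x) = 2) :
    ∃ s : (Fin (m + 2*k) → ℂ) →ₗ[ℂ] (Fin (m + 2*(k+1)) → ℂ),
      (∀ w, gamK m k (s w) = w) ∧ x = s ∘ₗ sigK m k := by
  have hle : LinearMap.ker x ≤ LinearMap.ker (sigK m k) := by
    intro v hv
    rw [LinearMap.mem_ker] at hv ⊢
    rw [← gamK_apply_of_mem hx, hv, map_zero]
  have heq := Submodule.eq_of_le_of_finrank_eq hle (by rw [hk, finrank_ker_sigK])
  refine ⟨x ∘ₗ tauK m k, fun w => ?_, LinearMap.ext fun v => ?_⟩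
  · rw [LinearMap.comp_apply, gamK_apply_of_mem hx, sigK_tauK]
  · have : v - tauK m k (sigK m k v) ∈ LinearMap.ker x := by
      rw [heq, LinearMap.mem_ker, map_sub, sigK_tauK, sub_self]
    rw [LinearMap.mem_ker, map_sub, sub_eq_zero] at this
    exact this

lemma slice'_comp {m k : ℕ} {s : (Fin (m + 2*k) → ℂ) →ₗ[ℂ] (Fin (m + 2*(k+1)) → ℂ)}
    (hs : ∀ w, gamK m k (s w) = w) : s ∘ₗ sigK m k ∈ slice' m (k+1) := by
  rw [mem_slice'_iff]
  intro v i h h'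
  have key := hs (sigK m k v)
  by_cases hi : i < m + k
  · have := congrFun key ⟨i, by omega⟩
    rwa [gamK_apply_lt m k _ i hi, sigK_apply_lt m k _ i hi] at this
  · obtain ⟨i, rfl⟩ : ∃ j, i = j + 1 := ⟨i - 1, by omega⟩
    have := congrFun key ⟨i, by omega⟩
    rwa [gamK_apply_ge m k _ i (by omega), sigK_apply_ge m k _ i (by omega)] at this

lemma finrank_ker_comp {m k : ℕ} {s : (Fin (m + 2*k) → ℂ) →ₗ[ℂ] (Fin (m + 2*(k+1)) → ℂ)}
    (hs : ∀ w, gamK m k (s w) = w) : finrank ℂ (LinearMap.ker (s ∘ₗ sigK m k)) = 2 := by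
  rw [LinearMap.ker_comp_of_ker_eq_bot, finrank_ker_sigK]
  exact LinearMap.ker_eq_bot.2 (Function.LeftInverse.injective hs)

/-- If `x = s ∘ σ` with `s` a section of `γ`, then `s` inverts `γ|_{im x}` and `Φ(x) = σ ∘ s`. -/
lemma Phi_comp {m k : ℕ} {s : (Fin (m + 2*k) → ℂ) →ₗ[ℂ] (Fin (m + 2*(k+1)) → ℂ)}
    (hs : ∀ w, gamK m k (s w) = w) : Phi m (k+1) (s ∘ₗ sigK m k) = sigK m k ∘ₗ s := by
  have hmem : ∀ w, s w ∈ LinearMap.range (s ∘ₗ sigK m k) := fun w =>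
    ⟨tauK m k w, by rw [LinearMap.comp_apply, sigK_tauK]⟩
  have hb : Function.Bijective
      ((gam m (k+1)).domRestrict (LinearMap.range (s ∘ₗ sigK m k))) := by
    constructor
    · rintro ⟨_, v, rfl⟩ ⟨_, v', rfl⟩ h
      have h' : gamK m k (s (sigK m k v)) = gamK m k (s (sigK m k v')) := h
      rw [hs, hs] at h'
      simp [h']
    · exact fun w => ⟨⟨s w, hmem w⟩, hs w⟩
  rw [Phi, dif_pos hb]
  refine LinearMap.ext fun w => ?_
  have hsymm : (LinearEquiv.ofBijective _ hb).symm w = ⟨s w, hmem w⟩ := by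
    rw [LinearEquiv.symm_apply_eq]
    exact (hs w).symm
  simp only [LinearMap.comp_apply, LinearEquiv.coe_coe, hsymm, Submodule.subtype_apply]
  exact hs _

lemma isNilpotent_comp_swap {V W : Type*} [AddCommGroup V] [Module ℂ V] [AddCommGroup W]
    [Module ℂ W] (f : V →ₗ[ℂ] W) (g : W →ₗ[ℂ] V) (h : IsNilpotent (g ∘ₗ f : Module.End ℂ V)) :
    IsNilpotent (f ∘ₗ g : Module.End ℂ W) := by
  have key : ∀ (r : ℕ) (w : W), ((f ∘ₗ g : Module.End ℂ W) ^ (r + 1)) w =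
      f (((g ∘ₗ f : Module.End ℂ V) ^ r) (g w)) := by
    intro r
    induction r with
    | zero => intro w; simp
    | succ r ih =>
      intro w
      rw [pow_succ, Module.End.mul_apply, ih, pow_succ (g ∘ₗ f), Module.End.mul_apply]
      rfl
  obtain ⟨r, hr⟩ := h
  refine ⟨r + 1, LinearMap.ext fun w => ?_⟩
  rw [key, hr]; simp

/-! ### The slice conditions on `s ∘ σ` and `σ ∘ s` -/

lemma sigK_single (m k j : ℕ) (h : j < m + k) :
    sigK m k (Pi.single ⟨j + 1, by omega⟩ 1) = Pi.single ⟨j, by omega⟩ 1 := by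
  ext ⟨i, hi⟩
  by_cases h1 : i < m + k
  · rw [sigK_apply_lt m k _ i h1]
    simp [Pi.single_apply, Fin.ext_iff]
  · rw [sigK_apply_ge m k _ i (by omega) hi]
    simp only [Pi.single_apply, Fin.ext_iff]
    rw [if_neg (by omega), if_neg (by omega)]

lemma comp_slice' {m k : ℕ} {s : (Fin (m + 2*k) → ℂ) →ₗ[ℂ] (Fin (m + 2*(k+1)) → ℂ)}
    (hs : ∀ w, gamK m k (s w) = w) : sigK m k ∘ₗ s ∈ slice' m k := by
  rw [mem_slice'_iff]
  intro w i h h'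
  rw [LinearMap.comp_apply]
  by_cases hi : i < m + k
  · rw [sigK_apply_lt m k _ i hi, ← gamK_apply_lt m k (s w) (i + 1) (by omega), hs]
  · rw [sigK_apply_ge m k _ i (by omega), ← gamK_apply_ge m k (s w) (i + 1) (by omega) h,
      hs]

/-- For a section `s` of `γ`, the slice condition on `s ∘ σ` says that the last coordinate of `s`
vanishes on the basis vectors `k, …, m+k-1` (`0`-based). -/
lemma comp_mem_MVslice_iff {m k : ℕ} {s : (Fin (m + 2*k) → ℂ) →ₗ[ℂ] (Fin (m + 2*(k+1)) → ℂ)}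
    (hs : ∀ w, gamK m k (s w) = w) : s ∘ₗ sigK m k ∈ MVslice m (k+1) ↔
      ∀ (j : ℕ) (_ : k ≤ j) (_ : j < m + k),
        s (Pi.single ⟨j, by omega⟩ 1) ⟨m + 2*k + 1, by omega⟩ = 0 := by
  rw [mem_MVslice_succ_iff]
  constructor
  · intro H j h1 h2
    rw [← sigK_single m k j h2]
    exact H.2 (j + 1) (by omega) (by omega)
  · refine fun H => ⟨slice'_comp hs, fun j h1 h2 => ?_⟩
    obtain ⟨j, rfl⟩ : ∃ i, j = i + 1 := ⟨j - 1, by omega⟩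
    rw [LinearMap.comp_apply, sigK_single m k j (by omega)]
    exact H j (by omega) (by omega)

/-- For `n ≥ 2` the slice conditions on `s ∘ σ` and on `σ ∘ s` are the same. -/
lemma MVslice_comp_iff {m l : ℕ}
    {s : (Fin (m + 2*(l+1)) → ℂ) →ₗ[ℂ] (Fin (m + 2*(l+1+1)) → ℂ)}
    (hs : ∀ w, gamK m (l+1) (s w) = w) :
    s ∘ₗ sigK m (l+1) ∈ MVslice m (l+1+1) ↔ sigK m (l+1) ∘ₗ s ∈ MVslice m (l+1) := by
  rw [comp_mem_MVslice_iff hs, mem_MVslice_succ_iff, and_iff_right (comp_slice' hs)]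
  have : ∀ w, (sigK m (l+1) ∘ₗ s) w ⟨m + 2*l + 1, by omega⟩ =
      s w ⟨m + 2*(l+1) + 1, by omega⟩ := by
    intro w
    rw [LinearMap.comp_apply, sigK_apply_ge m (l+1) _ _ (by omega)]
    rfl
  simp only [this]
  exact Iff.rfl

/-! ### Reconstructing the section from `σ ∘ s` -/

/-- The section of `γ` whose coordinates at the block ends are the free rows of `y`
(zero where the corresponding block of `ℂ^(m+2k)` is empty). -/
def secK (m k : ℕ) (y : Module.End ℂ (Fin (m + 2*k) → ℂ)) :
    (Fin (m + 2*k) → ℂ) →ₗ[ℂ] (Fin (m + 2*(k+1)) → ℂ) where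
  toFun w i :=
    if h : (i : ℕ) < m + k then w ⟨i, by omega⟩
    else if h : (i : ℕ) = m + k then (if h : 1 ≤ m + k then y w ⟨m + k - 1, by omega⟩ else 0)
    else if h : (i : ℕ) < m + 2*k + 1 then w ⟨i - 1, by omega⟩
    else if h : 1 ≤ k then y w ⟨m + 2*k - 1, by omega⟩ else 0
  map_add' a b := by
    ext i; simp only [Pi.add_apply, map_add]; split_ifs <;> simp
  map_smul' c a := by
    ext i; simp only [Pi.smul_apply, map_smul]; split_ifs <;> simp

lemma gamK_secK (m k : ℕ) (y : Module.End ℂ (Fin (m + 2*k) → ℂ)) (w : Fin (m + 2*k) → ℂ) :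
    gamK m k (secK m k y w) = w := by
  ext ⟨i, hi⟩
  by_cases h : i < m + k
  · rw [gamK_apply_lt m k _ i h]
    exact dif_pos h
  · rw [gamK_apply_ge m k _ i (by omega) hi]
    change dite _ _ _ = _
    rw [dif_neg (by simp only; omega), dif_neg (by simp only; omega),
      dif_pos (by simp only; omega)]
    rfl

lemma sigK_secK {m k : ℕ} {y : Module.End ℂ (Fin (m + 2*k) → ℂ)} (hy : y ∈ slice' m k) :
    sigK m k ∘ₗ secK m k y = y := by
  rw [mem_slice'_iff] at hy
  refine LinearMap.ext fun w => ?_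
  ext ⟨i, hi⟩
  rw [LinearMap.comp_apply]
  by_cases h : i < m + k
  · rw [sigK_apply_lt m k _ i h]
    change dite _ _ _ = _
    by_cases h1 : i + 1 = m + k
    · rw [dif_neg (by simp only; omega), dif_pos (by simp only; omega), dif_pos (by omega)]
      exact congrArg (y w) (Fin.ext (by simp only; omega))
    · rw [dif_pos (by simp only; omega)]
      exact (hy w i (by omega) h1).symm
  · rw [sigK_apply_ge m k _ i (by omega) hi]
    change dite _ _ _ = _
    rw [dif_neg (by simp only; omega), dif_neg (by simp only; omega)]
    by_cases h1 : i + 1 = m + 2*k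
    · rw [dif_neg (by simp only; omega), dif_pos (by omega)]
      exact congrArg (y w) (Fin.ext (by simp only; omega))
    · rw [dif_pos (by simp only; omega)]
      exact (hy w i (by omega) (by omega)).symm

lemma section_injective {m k : ℕ} {s t : (Fin (m + 2*k) → ℂ) →ₗ[ℂ] (Fin (m + 2*(k+1)) → ℂ)}
    (hs : ∀ w, gamK m k (s w) = w) (ht : ∀ w, gamK m k (t w) = w)
    (hsM : s ∘ₗ sigK m k ∈ MVslice m (k+1)) (htM : t ∘ₗ sigK m k ∈ MVslice m (k+1))
    (h : sigK m k ∘ₗ s = sigK m k ∘ₗ t) : s = t := by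
  refine (Pi.basisFun ℂ _).ext fun j => ?_
  rw [Pi.basisFun_apply]
  set w : Fin (m + 2*k) → ℂ := Pi.single j 1 with hw
  have hγ : gamK m k (s w) = gamK m k (t w) := by rw [hs, ht]
  have hσ : sigK m k (s w) = sigK m k (t w) := LinearMap.congr_fun h w
  have hj := j.2
  ext ⟨i, hi⟩
  by_cases h1 : i < m + k
  · rw [← gamK_apply_lt m k (s w) i h1, ← gamK_apply_lt m k (t w) i h1, hγ]
  by_cases h2 : i = m + k
  · -- `m + k ≥ 1` here, since otherwise `ℂ^(m+2k)` has no basis vector `j`.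
    obtain ⟨i, rfl⟩ : ∃ r, i = r + 1 := ⟨i - 1, by omega⟩
    rw [← sigK_apply_lt m k (s w) i (by omega), ← sigK_apply_lt m k (t w) i (by omega), hσ]
  by_cases h3 : i < m + 2*k + 1
  · obtain ⟨i, rfl⟩ : ∃ r, i = r + 1 := ⟨i - 1, by omega⟩
    rw [← gamK_apply_ge m k (s w) i (by omega) (by omega),
      ← gamK_apply_ge m k (t w) i (by omega) (by omega), hγ]
  obtain rfl : i = m + 2*k + 1 := by omega
  by_cases hk : k = 0
  · -- The second block is empty, and the slice condition forces the last coordinate to be zero.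
    rw [comp_mem_MVslice_iff hs] at hsM
    rw [comp_mem_MVslice_iff ht] at htM
    exact (hsM j (by omega) (by omega)).trans (htM j (by omega) (by omega)).symm
  · have e : ∀ v : Fin (m + 2*(k+1)) → ℂ,
        v ⟨m + 2*k + 1, hi⟩ = sigK m k v ⟨m + 2*k - 1, by omega⟩ := by
      intro v
      rw [sigK_apply_ge m k _ _ (by omega)]
      congr 2; omega
    rw [e (s w), e (t w), hσ]

/-- The map `x ↦ Φ(x) = γ ∘ x ∘ (γ|_{im x})⁻¹` is a bijection from the
set of nilpotent elements of the Mirkovic–Vybornov slice `S_n` with two-dimensional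
kernel onto the set of nilpotent elements of the slice `S_{n−1}`. -/
theorem Phi_bijOn_nilpotent_slice (m n : ℕ) (hn : 1 ≤ n) :
    Set.BijOn (Phi m n)
      { x | x ∈ MVslice m n ∧ IsNilpotent x ∧ Module.finrank ℂ (LinearMap.ker x) = 2 }
      { y | y ∈ MVslice m (n-1) ∧ IsNilpotent y } := by
  obtain ⟨k, rfl⟩ : ∃ k, n = k + 1 := ⟨n - 1, by omega⟩
  refine ⟨?_, ?_, ?_⟩
  · rintro x ⟨hxM, hxN, hxk⟩
    obtain ⟨s, hs, rfl⟩ := exists_section hxM.1 hxk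
    rw [Phi_comp hs]
    refine ⟨?_, isNilpotent_comp_swap _ _ hxN⟩
    cases k with
    | zero => exact (mem_MVslice_zero_iff m _).2 (comp_slice' hs)
    | succ l => exact (MVslice_comp_iff hs).1 hxM
  · rintro x ⟨hxM, hxN, hxk⟩ x' ⟨hxM', hxN', hxk'⟩ h
    obtain ⟨s, hs, rfl⟩ := exists_section hxM.1 hxk
    obtain ⟨t, ht, rfl⟩ := exists_section hxM'.1 hxk'
    rw [Phi_comp hs, Phi_comp ht] at h
    rw [section_injective hs ht hxM hxM' h]
  · rintro y ⟨hyM, hyN⟩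
    change Module.End ℂ (Fin (m + 2*k) → ℂ) at y
    change y ∈ MVslice m k at hyM
    change IsNilpotent y at hyN
    have hs := gamK_secK m k y
    have hσ := sigK_secK hyM.1
    refine ⟨secK m k y ∘ₗ sigK m k, ⟨?_, ?_, finrank_ker_comp hs⟩, (Phi_comp hs).trans hσ⟩
    · cases k with
      | zero =>
        refine (comp_mem_MVslice_iff hs).2 fun j _ _ => ?_
        change dite _ _ _ = _
        rw [dif_neg (by simp only; omega), dif_neg (by simp only; omega),
          dif_neg (by simp only; omega), dif_neg (by omega)]
      | succ l => exact (MVslice_comp_iff hs).2 (by rwa [hσ])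
    · exact isNilpotent_comp_swap _ _ (by rwa [hσ])
end
end
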